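/- arXiv:2310.19073 — 4 statements merged into one kernel-verified Lean document; each statement's English description precedes it below -/
import Mathlib

section
/- Let μ₊ > 0 and set ρ₋ = (1 + 2μ₊)/(1 + 3μ₊). Let a, b, c be real numbers with a > b > c, and define b' = b - μ₊(c - b) and c' = c - μ₊(b - c). Then max(|a - b'|, |b' - c'|) ≥ ρ₋ (a - b). -/
/-- Lemma 3.4: with `ρ₋ = (1 + 2μ₊)/(1 + 3μ₊)`, if `a > b > c` and a repulsive interaction
moves `b, c` to `b' = b - μ₊(c - b)`, `c' = c - μ₊(b - c)`, then
`max(|a - b'|, |b' - c'|) ≥ ρ₋ (a - b)`. -/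
theorem stmt_3 (μp : ℝ) (hμp : 0 < μp) (ρm : ℝ) (hρm : ρm = (1 + 2*μp) / (1 + 3*μp))
    (a b c : ℝ) (hab : b < a) (hbc : c < b)
    (b' c' : ℝ) (hb' : b' = b - μp * (c - b)) (hc' : c' = c - μp * (b - c)) :
    ρm * (a - b) ≤ max |a - b'| |b' - c'| := by
  have h1 : a - b' ≤ max |a - b'| |b' - c'| := (le_abs_self _).trans (le_max_left _ _)
  have h2 : b' - c' ≤ max |a - b'| |b' - c'| := (le_abs_self _).trans (le_max_right _ _)
  generalize max |a - b'| |b' - c'| = M at h1 h2 ⊢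
  subst hρm hb' hc'
  have h3 : 0 < 1 + 3 * μp := by linarith
  rw [div_mul_eq_mul_div, div_le_iff₀ h3]
  have h4 := mul_le_mul_of_nonneg_left h1 (by linarith : 0 ≤ 1 + 2 * μp)
  have h5 := mul_le_mul_of_nonneg_left h2 hμp.le
  linarith
end

section
/- Let μ₊ > 0 and set ρ₋ = (1 + 2μ₊)/(1 + 3μ₊). Let a, b, c be real numbers with a > b > c and a - b ≥ μ₊(b - c). Define b' = b - μ₊(c - b) and c' = c - μ₊(b - c). Then a - b' ≥ 0, b' - c' ≥ 0, and max(a - b', b' - c') ≥ ρ₋ (a - b). -/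
/-- Case 2 in the proof of Lemma 3.4: with `ρ₋ = (1 + 2μ₊)/(1 + 3μ₊)`, if `a > b > c` and
`a - b ≥ μ₊(b - c)`, then `b' = b - μ₊(c - b)`, `c' = c - μ₊(b - c)` satisfy `a - b' ≥ 0`,
`b' - c' ≥ 0` and `max(a - b', b' - c') ≥ ρ₋ (a - b)`. -/
theorem stmt_5 (μp : ℝ) (hμp : 0 < μp) (ρm : ℝ) (hρm : ρm = (1 + 2*μp) / (1 + 3*μp))
    (a b c : ℝ) (hab : b < a) (hbc : c < b) (hcase : μp * (b - c) ≤ a - b)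
    (b' c' : ℝ) (hb' : b' = b - μp * (c - b)) (hc' : c' = c - μp * (b - c)) :
    0 ≤ a - b' ∧ 0 ≤ b' - c' ∧ ρm * (a - b) ≤ max (a - b') (b' - c') := by
  subst hρm hb' hc'
  have h3 : 0 < 1 + 3 * μp := by linarith
  have hy : 0 < μp * (b - c) := mul_pos hμp (by linarith)
  refine ⟨by linarith, by linarith, ?_⟩
  rw [div_mul_eq_mul_div, div_le_iff₀ h3]
  set M := max (a - (b - μp * (c - b))) (b - μp * (c - b) - (c - μp * (b - c))) with hM
  have h1 : a - (b - μp * (c - b)) ≤ M := le_max_left _ _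
  have h2 : b - μp * (c - b) - (c - μp * (b - c)) ≤ M := le_max_right _ _
  have k1 := mul_le_mul_of_nonneg_left h1 (show 0 ≤ 1 + 2 * μp by linarith)
  have k2 := mul_le_mul_of_nonneg_left h2 hμp.le
  linarith
end

section
/- Let θ > 0, μ₋ > 0, μ₊ > 0, set ρ₋ = (1 + 2μ₊)/(1 + 3μ₊) and D = (3 + 1/μ₊)μ₋θ. Let a, b, c be real numbers with |a - b| > D, and let (b'', c'') be the result of one Deffuant interaction with attraction and repulsion between opinions b and c: if |b - c| ≤ θ then b'' = b + μ₋(c - b) and c'' = c + μ₋(b - c), while if |b - c| > θ then b'' = b - μ₊(c - b) and c'' = c - μ₊(b - c). Then max(|a - b''|, |b'' - c''|) ≥ ρ₋ |a - b|. -/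
/-- Lemma 3.5 (deterministic content): with `ρ₋ = (1 + 2μ₊)/(1 + 3μ₊)` and
`D = (3 + 1/μ₊)μ₋θ`, if `|a - b| > D` and `(b'', c'')` is the result of one Deffuant
interaction with attraction (`|b - c| ≤ θ`) and repulsion (`|b - c| > θ`) between `b` and `c`,
then `max(|a - b''|, |b'' - c''|) ≥ ρ₋ |a - b|`. -/
theorem stmt_7 (θ μm μp : ℝ) (hθ : 0 < θ) (hμm : 0 < μm) (hμp : 0 < μp)
    (ρm D : ℝ) (hρm : ρm = (1 + 2*μp) / (1 + 3*μp)) (hD : D = (3 + 1/μp) * μm * θ)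
    (a b c b'' c'' : ℝ) (hab : D < |a - b|)
    (hatt : |b - c| ≤ θ → b'' = b + μm * (c - b) ∧ c'' = c + μm * (b - c))
    (hrep : θ < |b - c| → b'' = b - μp * (c - b) ∧ c'' = c - μp * (b - c)) :
    ρm * |a - b| ≤ max |a - b''| |b'' - c''| := by
  have h3 : 0 < 1 + 3 * μp := by linarith
  obtain ⟨t, ht⟩ : ∃ t, t = |a - b| / (1 + 3 * μp) := ⟨_, rfl⟩
  have hx : |a - b| = (1 + 3 * μp) * t := by rw [ht]; field_simp
  have hρ : ρm * |a - b| = (1 + 2 * μp) * t := by rw [hρm, ht]; ring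
  have htri : |a - b| ≤ |a - b''| + |b'' - b| := abs_sub_le a b'' b
  rw [hρ]
  rcases le_or_gt |b - c| θ with h | h
  · obtain ⟨hb, -⟩ := hatt h
    apply le_max_of_le_left
    have h1 : |b'' - b| = μm * |b - c| := by
      rw [hb, abs_sub_comm b c, add_sub_cancel_left, abs_mul, abs_of_pos hμm]
    have h2 : μm * |b - c| ≤ μm * θ := mul_le_mul_of_nonneg_left h hμm.le
    have h4 : D = (1 + 3 * μp) * (μm * θ / μp) := by rw [hD]; field_simp; ring
    rw [h4, hx] at hab
    have h5 : μm * θ / μp < t := lt_of_mul_lt_mul_left hab h3.le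
    rw [div_lt_iff₀ hμp] at h5
    linarith
  · obtain ⟨hb, hc⟩ := hrep h
    have h1 : |b'' - b| = μp * |b - c| := by
      rw [hb, show b - μp * (c - b) - b = μp * (b - c) by ring, abs_mul, abs_of_pos hμp]
    have h2 : |b'' - c''| = (1 + 2 * μp) * |b - c| := by
      rw [hb, hc, show b - μp * (c - b) - (c - μp * (b - c)) = (1 + 2 * μp) * (b - c) by ring,
        abs_mul, abs_of_pos (by linarith : 0 < 1 + 2 * μp)]
    rcases le_total t |b - c| with h6 | h6
    · apply le_max_of_le_right
      rw [h2]
      exact mul_le_mul_of_nonneg_left h6 (by linarith)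
    · apply le_max_of_le_left
      have := mul_le_mul_of_nonneg_left h6 hμp.le
      linarith
end

section
/- Let μ₊ > 0, θ > 0, c₀ ≥ θ/2, and ε > 0. Set c₊ = (2μ₊ + 1)(c₀ + ε), I_ε = [-c₀ - 2ε, -c₀] ∪ [c₀, c₀ + 2ε], and J_ε = [-2μ₊(c₀ + ε) - ε/(1 + 1/μ₊), -2μ₊(c₀ + ε) + ε/(1 + 1/μ₊)]. Then for every b ∈ J_ε one has: c₊ + b ∈ I_ε, c₊ + b + b/μ₊ ∈ I_ε, and |b| > θμ₊ (so b ∉ [-θμ₊, θμ₊]). -/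
/-- Mean-field computation: with `c₊ = (2μ₊ + 1)(c₀ + ε)`,
`I_ε = [-c₀ - 2ε, -c₀] ∪ [c₀, c₀ + 2ε]` and
`J_ε = [-2μ₊(c₀ + ε) - ε/(1 + 1/μ₊), -2μ₊(c₀ + ε) + ε/(1 + 1/μ₊)]`, every `b ∈ J_ε`
satisfies `c₊ + b ∈ I_ε`, `c₊ + b + b/μ₊ ∈ I_ε` and `|b| > θμ₊`. -/
theorem stmt_14 (μp θ c₀ ε : ℝ) (hμp : 0 < μp) (hθ : 0 < θ) (hc₀ : θ/2 ≤ c₀) (hε : 0 < ε)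
    (cP : ℝ) (hcP : cP = (2*μp + 1) * (c₀ + ε))
    (Iε : Set ℝ)
    (hI : Iε = Set.Icc (-c₀ - 2*ε) (-c₀) ∪ Set.Icc c₀ (c₀ + 2*ε))
    (Jε : Set ℝ)
    (hJ : Jε = Set.Icc (-(2*μp)*(c₀ + ε) - ε/(1 + 1/μp)) (-(2*μp)*(c₀ + ε) + ε/(1 + 1/μp))) :
    ∀ b ∈ Jε, cP + b ∈ Iε ∧ cP + b + b/μp ∈ Iε ∧ θ*μp < |b| := by
  intro b hb
  subst hI hJ hcP
  obtain ⟨h1, h2⟩ := hb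
  have hk : 0 < 1 / μp := by positivity
  have hd : 0 < ε / (1 + 1 / μp) := by positivity
  have hde : ε / (1 + 1 / μp) * (1 + 1 / μp) = ε := by field_simp
  have hdm : ε / (1 + 1 / μp) * (μp + 1) = ε * μp := by field_simp
  have hdiv : b / μp = (b + 2 * μp * (c₀ + ε)) * (1 / μp) - 2 * (c₀ + ε) := by
    field_simp
    ring
  rw [hdiv]
  generalize ε / (1 + 1 / μp) = d at *
  generalize 1 / μp = k at *
  obtain ⟨t, ht⟩ : ∃ t, t = b + 2 * μp * (c₀ + ε) := ⟨_, rfl⟩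
  have hb : b = t - 2 * μp * (c₀ + ε) := by linarith
  have t1 : -d ≤ t := by linarith
  have t2 : t ≤ d := by linarith
  have hdk : 0 < d * k := mul_pos hd hk
  have hdp : 0 < d * μp := mul_pos hd hμp
  have u1 : -d * k ≤ t * k := mul_le_mul_of_nonneg_right t1 hk.le
  have u2 : t * k ≤ d * k := mul_le_mul_of_nonneg_right t2 hk.le
  rw [← ht]
  refine ⟨Or.inr ⟨by linarith, by linarith⟩, Or.inl ⟨by linarith, by linarith⟩, ?_⟩
  have hm : θ / 2 * μp ≤ c₀ * μp := mul_le_mul_of_nonneg_right hc₀ hμp.le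
  have := mul_pos hε hμp
  have := neg_le_abs b
  linarith
end
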